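/- (Lemma 1, dual form of the minimised emancipated hypothesis testing quantity) Let ρ be a state on H, ‖·‖_μ a resource norm on T_sa(H), and ε ∈ [0,1). Then inf{d_ħ^ε(ρ‖Z) : Z ∈ T_sa(H), ‖Z‖_μ ≤ 1} = max{1/‖Q‖_μ° : Q ∈ T_sa(H), ‖Q‖∞ ≤ 1, ⟨Q,ρ⟩ ≥ 1−ε}, where both sides take values in (0,+∞] and the maximum on the right-hand side is attained. -/

import Mathlib

/-!
Let `K = {Q : ‖Q‖∞ ≤ 1, ⟨Q, ρ⟩ ≥ 1 - ε}` and let `B` be the unit ball of the resource norm. Both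
sets are convex and compact, and `(Q, Z) ↦ ⟨Q, Z⟩` is bilinear and continuous, so the
Sion–von Neumann minimax theorem gives a saddle point `Q₀ ∈ K`, `Z₀ ∈ B`, that is
`⟨Q₀, Z⟩ ≤ ⟨Q, Z₀⟩` for all `Q ∈ K` and `Z ∈ B` (`exists_saddle`). With `v = ⟨Q₀, Z₀⟩` this says
that `v = ‖Q₀‖_μ°` is the least dual norm on `K`, and that `v` is the infimum of `⟨Q, Z₀⟩` over `K`,
which is the largest such infimum among all `Z ∈ B`. Testing `Q₀` against `ρ / ‖ρ‖_μ` shows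
`v > 0`, so inverting turns these two facts into the claim.

Compactness of `B` is the equivalence of norms in finite dimension (`isCompact_normBall`).
Compactness of `K` uses the description of `‖Q‖∞ ≤ 1` by `-1 ≤ Q ≤ 1` (`opNorm_le_one_iff`), which
makes `K` closed, and the spectral theorem, which bounds the entries (`norm_entry_le`).
-/

open scoped ComplexOrder
open Filter

noncomputable section

/-- The real vector space of self-adjoint (Hermitian) operators on `ℂ^ι`. -/
abbrev HMat (ι : Type) [Fintype ι] [DecidableEq ι] : Type :=
  selfAdjoint (Matrix ι ι ℂ)

variable {ι κ : Type} [Fintype ι] [DecidableEq ι] [Fintype κ] [DecidableEq κ]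

/-- The matrix underlying a self-adjoint operator is Hermitian. -/
def herm (X : HMat ι) : X.1.IsHermitian := X.2

/-- The (real) Hilbert–Schmidt inner product `⟨Q, X⟩ = Tr (Q X)`. -/
def hip (Q X : HMat ι) : ℝ := (Matrix.trace (Q.1 * X.1)).re

/-- The trace norm of a self-adjoint operator: the sum of absolute values of eigenvalues. -/
def trNorm (X : HMat ι) : ℝ := ∑ i, |(herm X).eigenvalues i|

/-- The operator norm of a self-adjoint operator: the largest absolute value of an eigenvalue. -/
def opNorm (X : HMat ι) : ℝ := ⨆ i, |(herm X).eigenvalues i|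

/-- A state: a positive semidefinite operator of unit trace. -/
def IsState (ρ : HMat ι) : Prop := ρ.1.PosSemidef ∧ Matrix.trace ρ.1 = 1

/-- A pure state: a rank-one orthogonal projection. -/
def IsPureState (φ : HMat ι) : Prop := IsState φ ∧ φ.1 * φ.1 = φ.1

/-- A norm-like function on self-adjoint operators. -/
structure MatNorm (ι : Type) [Fintype ι] [DecidableEq ι] where
  toFun : HMat ι → ℝ
  eq_zero' : ∀ X, toFun X = 0 → X = 0
  smul' : ∀ (t : ℝ) (X), toFun (t • X) = |t| * toFun X
  add_le' : ∀ X Y, toFun (X + Y) ≤ toFun X + toFun Y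

/-- A resource norm: a norm with `‖ρ‖ ≥ 1` on every state. -/
structure ResourceNorm (ι : Type) [Fintype ι] [DecidableEq ι] extends MatNorm ι where
  one_le_state' : ∀ ρ, IsState ρ → 1 ≤ toFun ρ

/-- The dual norm `‖Q‖° = sup {⟨Q, X⟩ : ‖X‖ ≤ 1}`. -/
def dualNormF (ν : HMat ι → ℝ) (Q : HMat ι) : ℝ :=
  sSup {r | ∃ X, ν X ≤ 1 ∧ r = hip Q X}

/-- Membership in the class `O_μ` of maps contracting the trace norm and the resource norms. -/
def MemO (νi : ResourceNorm ι) (νo : ResourceNorm κ) (Λ : HMat ι →ₗ[ℝ] HMat κ) : Prop :=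
  (∀ X, trNorm (Λ X) ≤ trNorm X) ∧ (∀ X, νo.toFun (Λ X) ≤ νi.toFun X)

/-- The trace-norm ε-ball around a state. -/
def ball (ρ : HMat ι) (ε : ℝ) : Set (HMat ι) :=
  {X | trNorm X ≤ 1 ∧ trNorm (X - ρ) ≤ ε}

/-- Loewner order: `A ≤ B` iff `B - A` is positive semidefinite. -/
def loew (A B : Matrix ι ι ℂ) : Prop := (B - A).PosSemidef

/-- The feasible values `⟨Q, Z⟩` entering the emancipated hypothesis testing quantity. -/
def dhSet (ρ Z : HMat ι) (ε : ℝ) : Set ℝ :=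
  {r | ∃ Q : HMat ι, loew (-(1 : Matrix ι ι ℂ)) Q.1 ∧ loew Q.1 1 ∧
        1 - ε ≤ hip Q ρ ∧ r = hip Q Z}

/-- The non-logarithmic emancipated hypothesis testing quantity `d_ħ^ε(ρ‖Z)`,
with value `+∞` when the infimum is `≤ 0`. -/
def dEmanc (ρ Z : HMat ι) (ε : ℝ) : EReal :=
  if 0 < sInf (dhSet ρ Z ε) then (((sInf (dhSet ρ Z ε))⁻¹ : ℝ) : EReal) else ⊤

/-- The emancipated hypothesis testing relative entropy `D_ħ^ε(ρ‖Z)` (base-2 logarithmic form),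
with value `+∞` when the infimum is `≤ 0`. -/
def DEmanc (ρ Z : HMat ι) (ε : ℝ) : EReal :=
  if 0 < sInf (dhSet ρ Z ε) then ((-Real.logb 2 (sInf (dhSet ρ Z ε)) : ℝ) : EReal) else ⊤

namespace Etruscan

open Matrix

/-! ### The operator norm ball and the Loewner order -/

lemma loew_iff {d : Type} [Fintype d] [DecidableEq d] (Q : HMat d) :
    (loew (-(1 : Matrix d d ℂ)) Q.1 ∧ loew Q.1 1) ↔ ∀ i, |(herm Q).eigenvalues i| ≤ 1 := by
  have hspec := (herm Q).spectral_theorem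
  rw [Unitary.conjStarAlgAut_apply] at hspec
  have hU : ((herm Q).eigenvectorUnitary : Matrix d d ℂ) *
      star ((herm Q).eigenvectorUnitary : Matrix d d ℂ) = 1 :=
    Unitary.coe_mul_star_self _
  constructor
  · rintro ⟨h1, h2⟩ i
    -- Test both inequalities on the `i`-th eigenvector.
    have hv : (star ((herm Q).eigenvectorBasis i).ofLp) ⬝ᵥ ((herm Q).eigenvectorBasis i).ofLp
        = 1 := by
      have h := (herm Q).eigenvectorBasis.orthonormal.1 i
      have h' : inner ℂ ((herm Q).eigenvectorBasis i) ((herm Q).eigenvectorBasis i) = 1 := by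
        rw [inner_self_eq_norm_sq_to_K, h]; simp
      rw [EuclideanSpace.inner_eq_star_dotProduct, dotProduct_comm] at h'
      exact h'
    have e1 := h1.dotProduct_mulVec_nonneg ((herm Q).eigenvectorBasis i).ofLp
    have e2 := h2.dotProduct_mulVec_nonneg ((herm Q).eigenvectorBasis i).ofLp
    rw [sub_mulVec, (herm Q).mulVec_eigenvectorBasis, neg_mulVec, one_mulVec, dotProduct_sub,
      dotProduct_smul, dotProduct_neg, hv] at e1
    rw [sub_mulVec, (herm Q).mulVec_eigenvectorBasis, one_mulVec, dotProduct_sub,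
      dotProduct_smul, hv] at e2
    have e1' := (Complex.le_def.1 e1).1
    have e2' := (Complex.le_def.1 e2).1
    simp at e1' e2'
    rw [abs_le]
    constructor <;> linarith
  · intro h
    constructor
    · have : Q.1 - -1 = ((herm Q).eigenvectorUnitary : Matrix d d ℂ) *
          (diagonal ((RCLike.ofReal : ℝ → ℂ) ∘ (herm Q).eigenvalues) + 1) *
          ((herm Q).eigenvectorUnitary : Matrix d d ℂ)ᴴ := by
        rw [mul_add, add_mul, ← star_eq_conjTranspose, ← hspec, mul_one, hU, sub_neg_eq_add]
      rw [loew, this]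
      refine PosSemidef.mul_mul_conjTranspose_same ?_ _
      rw [← diagonal_one, diagonal_add, posSemidef_diagonal_iff]
      intro i
      have := (abs_le.1 (h i)).1
      have h' : (0 : ℝ) ≤ (herm Q).eigenvalues i + 1 := by linarith
      simpa using (Complex.zero_le_real.2 h')
    · have : 1 - Q.1 = ((herm Q).eigenvectorUnitary : Matrix d d ℂ) *
          (1 - diagonal ((RCLike.ofReal : ℝ → ℂ) ∘ (herm Q).eigenvalues)) *
          ((herm Q).eigenvectorUnitary : Matrix d d ℂ)ᴴ := by
        rw [mul_sub, sub_mul, ← star_eq_conjTranspose, ← hspec, mul_one, hU]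
      rw [loew, this]
      refine PosSemidef.mul_mul_conjTranspose_same ?_ _
      rw [← diagonal_one, diagonal_sub, posSemidef_diagonal_iff]
      intro i
      have := (abs_le.1 (h i)).2
      have h' : (0 : ℝ) ≤ 1 - (herm Q).eigenvalues i := by linarith
      have h'' := Complex.zero_le_real.2 h'
      push_cast at h''
      exact h''

lemma opNorm_le_one_iff {d : Type} [Fintype d] [DecidableEq d] (Q : HMat d) :
    opNorm Q ≤ 1 ↔ loew (-(1 : Matrix d d ℂ)) Q.1 ∧ loew Q.1 1 := by
  rw [loew_iff]
  refine ⟨fun h i => (le_ciSup (Set.finite_range _).bddAbove i).trans h, fun h => ?_⟩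
  exact Real.iSup_le h zero_le_one

lemma norm_entry_le {d : Type} [Fintype d] [DecidableEq d] (Q : HMat d)
    (h : ∀ i, |(herm Q).eigenvalues i| ≤ 1) (i j : d) : ‖Q.1 i j‖ ≤ Fintype.card d := by
  have hspec := (herm Q).spectral_theorem
  rw [Unitary.conjStarAlgAut_apply] at hspec
  rw [hspec, mul_apply]
  refine (norm_sum_le _ _).trans ?_
  rw [Fintype.card, ← nsmul_one, ← Finset.sum_const]
  refine Finset.sum_le_sum fun k _ => ?_
  rw [mul_diagonal, norm_mul, norm_mul, star_apply, norm_star]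
  have b1 := entry_norm_bound_of_unitary (herm Q).eigenvectorUnitary.2 i k
  have b2 := entry_norm_bound_of_unitary (herm Q).eigenvectorUnitary.2 j k
  have b3 : ‖((RCLike.ofReal : ℝ → ℂ) ∘ (herm Q).eigenvalues) k‖ ≤ (1 : ℝ) := by
    simpa using h k
  exact mul_le_one₀ (mul_le_one₀ b1 (norm_nonneg _) b3) (norm_nonneg _) b2

/-! ### Linear and topological structure of the space of self-adjoint operators -/

/-- The inclusion of the self-adjoint operators into all matrices, as a real-linear map. -/
def incl (d : Type) [Fintype d] [DecidableEq d] : HMat d →ₗ[ℝ] Matrix d d ℂ where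
  toFun X := X.1
  map_add' _ _ := rfl
  map_smul' _ _ := rfl

instance finiteDimensional_hMat (d : Type) [Fintype d] [DecidableEq d] :
    FiniteDimensional ℝ (HMat d) :=
  FiniteDimensional.of_injective (incl d) Subtype.val_injective

instance continuousSMul_hMat (d : Type) [Fintype d] [DecidableEq d] :
    ContinuousSMul ℝ (HMat d) :=
  ⟨Continuous.subtype_mk
    (continuous_fst.smul (continuous_subtype_val.comp continuous_snd)) _⟩

lemma hip_comm {d : Type} [Fintype d] [DecidableEq d] (Q X : HMat d) : hip Q X = hip X Q := by
  rw [hip, hip, trace_mul_comm]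

/-- The functional `X ↦ ⟨Q, X⟩`. -/
def hipL {d : Type} [Fintype d] [DecidableEq d] (Q : HMat d) : HMat d →ₗ[ℝ] ℝ where
  toFun X := hip Q X
  map_add' X Y := by simp [hip, mul_add]
  map_smul' t X := by simp [hip]

lemma continuous_hip {d : Type} [Fintype d] [DecidableEq d] (Q : HMat d) :
    Continuous (hip Q) :=
  (hipL Q).continuous_of_finiteDimensional

/-- The image of a closed unit ball under a linear map out of a finite-dimensional normed space is
compact. -/
lemma isCompact_image_unitBall {F E : Type*} [NormedAddCommGroup F] [NormedSpace ℝ F]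
    [FiniteDimensional ℝ F] [AddCommGroup E] [Module ℝ E] [TopologicalSpace E]
    [IsTopologicalAddGroup E] [ContinuousSMul ℝ E] (L : F →ₗ[ℝ] E) :
    IsCompact (L '' {x | ‖x‖ ≤ 1}) := by
  have : {x : F | ‖x‖ ≤ 1} = Metric.closedBall 0 1 := by ext; simp
  rw [this]
  have := FiniteDimensional.proper ℝ F
  exact (isCompact_closedBall 0 1).image L.continuous_of_finiteDimensional

section MatNorm

variable {d : Type} [Fintype d] [DecidableEq d] (ν : MatNorm d)

lemma norm_zero' : ν.toFun 0 = 0 := by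
  simpa using ν.smul' 0 0

lemma norm_nonneg' (X : HMat d) : 0 ≤ ν.toFun X := by
  have h1 := ν.add_le' X ((-1 : ℝ) • X)
  rw [ν.smul'] at h1
  simp [norm_zero'] at h1
  linarith

lemma isCompact_normBall : IsCompact {X : HMat d | ν.toFun X ≤ 1} := by
  let n : Norm (HMat d) := ⟨ν.toFun⟩
  have core : @NormedSpace.Core ℝ (HMat d) _ _ _ n :=
    @NormedSpace.Core.mk ℝ (HMat d) _ _ _ n
      (@SeminormedSpace.Core.mk ℝ (HMat d) _ _ n _ (norm_nonneg' ν) (fun c x => ν.smul' c x)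
        ν.add_le')
      (fun x => ⟨ν.eq_zero' x, by rintro rfl; exact norm_zero' ν⟩)
  -- The identity map goes from `HMat d` with the norm topology to `HMat d` with the topology it
  -- inherits from matrices. The normed structure on the source is passed by hand because instance
  -- search would find the inherited topology there too.
  have := @isCompact_image_unitBall (HMat d) (HMat d) (@NormedAddCommGroup.ofCore ℝ _ _ _ _ n core)
    (@NormedSpace.mk ℝ (HMat d) _
      (@NormedAddCommGroup.ofCore ℝ _ _ _ _ n core).toSeminormedAddCommGroup _
      (fun r x => (ν.smul' r x).le))
    (finiteDimensional_hMat d) _ _ _ _ _ LinearMap.id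
  rwa [LinearMap.id_coe, Set.image_id] at this

lemma convex_normBall : Convex ℝ {X : HMat d | ν.toFun X ≤ 1} := by
  intro X hX Y hY a b ha hb hab
  refine (ν.add_le' _ _).trans ?_
  rw [ν.smul', ν.smul', abs_of_nonneg ha, abs_of_nonneg hb]
  have h1 := mul_le_mul_of_nonneg_left (show ν.toFun X ≤ 1 from hX) ha
  have h2 := mul_le_mul_of_nonneg_left (show ν.toFun Y ≤ 1 from hY) hb
  linarith

end MatNorm

/-! ### The feasible set of tests -/

/-- The feasible tests: `-1 ≤ Q ≤ 1` and `⟨Q, ρ⟩ ≥ 1 - ε`. -/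
def tests {d : Type} [Fintype d] [DecidableEq d] (ρ : HMat d) (ε : ℝ) : Set (HMat d) :=
  {Q | (loew (-(1 : Matrix d d ℂ)) Q.1 ∧ loew Q.1 1) ∧ 1 - ε ≤ hip Q ρ}

lemma isClosed_posSemidef {d : Type} [Fintype d] :
    IsClosed {A : Matrix d d ℂ | A.PosSemidef} := by
  have : {A : Matrix d d ℂ | A.PosSemidef} =
      {A | Aᴴ = A} ∩ ⋂ x : d → ℂ, {A | 0 ≤ star x ⬝ᵥ (A *ᵥ x)} := by
    ext A
    simp [posSemidef_iff_dotProduct_mulVec, IsHermitian]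
  rw [this]
  refine (isClosed_eq (by fun_prop) (by fun_prop)).inter (isClosed_iInter fun x => ?_)
  exact isClosed_le continuous_const (by fun_prop)

section Tests

variable {d : Type} [Fintype d] [DecidableEq d] (ρ : HMat d) (ε : ℝ)

lemma isClosed_tests : IsClosed (tests ρ ε) := by
  refine ((isClosed_posSemidef.preimage (f := fun Q : HMat d => Q.1 - -1) (by fun_prop)).inter
    (isClosed_posSemidef.preimage (f := fun Q : HMat d => 1 - Q.1) (by fun_prop))).inter ?_
  simp_rw [hip_comm _ ρ]
  exact isClosed_le continuous_const (continuous_hip ρ)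

lemma isCompact_tests : IsCompact (tests ρ ε) := by
  -- The self-adjoint matrices with entries in a fixed closed disc form a compact set.
  have hK : IsCompact (Set.univ.pi fun _ : d => Set.univ.pi fun _ : d =>
      Metric.closedBall (0 : ℂ) (Fintype.card d)) :=
    isCompact_univ_pi fun _ => isCompact_univ_pi fun _ => isCompact_closedBall _ _
  have hemb : Topology.IsClosedEmbedding (Subtype.val : HMat d → Matrix d d ℂ) := by
    refine IsClosed.isClosedEmbedding_subtypeVal ?_
    exact isClosed_eq (f := fun A : Matrix d d ℂ => star A) continuous_star continuous_id
  refine (hemb.isCompact_preimage hK).of_isClosed_subset (isClosed_tests ρ ε) ?_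
  intro Q hQ i _ j _
  simpa using norm_entry_le Q ((loew_iff Q).1 hQ.1) i j

lemma convex_tests : Convex ℝ (tests ρ ε) := by
  intro X hX Y hY a b ha hb hab
  have hc : (a : ℝ) • (1 : Matrix d d ℂ) + b • (1 : Matrix d d ℂ) = 1 := by
    rw [← add_smul, hab, one_smul]
  refine ⟨⟨?_, ?_⟩, ?_⟩
  · have e : (a • X + b • Y).1 - -1 = a • (X.1 - -1) + b • (Y.1 - -1) := by
      change a • X.1 + b • Y.1 - -1 = _
      rw [smul_sub, smul_sub, smul_neg, smul_neg]
      nth_rw 1 [← hc]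
      abel
    rw [loew, e]
    exact (hX.1.1.smul ha).add (hY.1.1.smul hb)
  · have e : 1 - (a • X + b • Y).1 = a • (1 - X.1) + b • (1 - Y.1) := by
      change 1 - (a • X.1 + b • Y.1) = _
      rw [smul_sub, smul_sub]
      nth_rw 1 [← hc]
      abel
    rw [loew, e]
    exact (hX.1.2.smul ha).add (hY.1.2.smul hb)
  · have e : hip (a • X + b • Y) ρ = a * hip X ρ + b * hip Y ρ := by
      simp_rw [hip_comm _ ρ]
      exact ((hipL ρ).map_add _ _).trans
        (congrArg₂ (· + ·) ((hipL ρ).map_smul a X) ((hipL ρ).map_smul b Y))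
    have h1 := mul_le_mul_of_nonneg_left hX.2 ha
    have h2 := mul_le_mul_of_nonneg_left hY.2 hb
    rw [e]
    have : 1 - ε = a * (1 - ε) + b * (1 - ε) := by rw [← add_mul, hab, one_mul]
    linarith

lemma one_mem_tests (hρ : IsState ρ) (hε : 0 ≤ ε) : (1 : HMat d) ∈ tests ρ ε := by
  refine ⟨⟨?_, ?_⟩, ?_⟩
  · have : ((1 : HMat d).1 - -1) = (1 : Matrix d d ℂ) + 1 := by simp
    rw [loew, this]
    exact PosSemidef.one.add PosSemidef.one
  · simpa [loew] using PosSemidef.zero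
  · simp [hip, hρ.2, hε]

lemma dhSet_eq (Z : HMat d) : dhSet ρ Z ε = (fun Q => hip Q Z) '' tests ρ ε := by
  ext r
  simp [dhSet, tests, and_assoc, eq_comm]

lemma bddBelow_dhSet (Z : HMat d) : BddBelow (dhSet ρ Z ε) := by
  rw [dhSet_eq]
  simp_rw [hip_comm _ Z]
  exact ((isCompact_tests ρ ε).image (continuous_hip Z)).bddBelow

end Tests

/-! ### The minimax argument -/

lemma exists_saddle {d : Type} [Fintype d] [DecidableEq d] (ν : MatNorm d) (ρ : HMat d)
    (hρ : IsState ρ) (ε : ℝ) (hε : 0 ≤ ε) :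
    ∃ Q₀ ∈ tests ρ ε, ∃ Z₀ ∈ {Z : HMat d | ν.toFun Z ≤ 1},
      IsSaddlePointOn (tests ρ ε) {Z : HMat d | ν.toFun Z ≤ 1} hip Q₀ Z₀ := by
  refine Sion.exists_isSaddlePointOn ⟨1, one_mem_tests ρ ε hρ hε⟩ (convex_tests ρ ε)
    (isCompact_tests ρ ε) (fun Z _ => ?_) (fun Z _ => ?_) (convex_normBall ν)
    ⟨0, by simp [norm_zero']⟩ (isCompact_normBall ν) (fun Q _ => ?_) (fun Q _ => ?_)
  · simp_rw [hip_comm _ Z]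
    exact (continuous_hip Z).lowerSemicontinuous.lowerSemicontinuousOn _
  · simp_rw [hip_comm _ Z]
    exact ((hipL Z).convexOn (convex_tests ρ ε)).quasiconvexOn
  · exact (continuous_hip Q).upperSemicontinuous.upperSemicontinuousOn _
  · exact ((hipL Q).concaveOn (convex_normBall ν)).quasiconcaveOn

lemma hip_le_dualNormF {d : Type} [Fintype d] [DecidableEq d] (ν : MatNorm d) (Q Z : HMat d)
    (hZ : ν.toFun Z ≤ 1) : hip Q Z ≤ dualNormF ν.toFun Q := by
  refine le_csSup ?_ ⟨Z, hZ, rfl⟩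
  have : {r | ∃ X, ν.toFun X ≤ 1 ∧ r = hip Q X} = hip Q '' {X | ν.toFun X ≤ 1} := by
    ext r
    simp [eq_comm]
  rw [this]
  exact ((isCompact_normBall ν).image (continuous_hip Q)).bddAbove

end Etruscan

open Etruscan in
/-- **Lemma 1 (dual form of the minimised emancipated hypothesis testing quantity).**
`inf {d_ħ^ε(ρ‖Z) : ‖Z‖_μ ≤ 1} = max {1/‖Q‖_μ° : ‖Q‖∞ ≤ 1, ⟨Q,ρ⟩ ≥ 1−ε}`,
with the maximum on the right-hand side attained. -/
theorem etruscan_dual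
    {d : Type} [Fintype d] [DecidableEq d]
    (ν : ResourceNorm d) (ρ : HMat d) (hρ : IsState ρ)
    (ε : ℝ) (hε0 : 0 ≤ ε) (hε1 : ε < 1) :
    ∃ Q : HMat d, opNorm Q ≤ 1 ∧ 1 - ε ≤ hip Q ρ ∧
      (⨅ Z ∈ {Z : HMat d | ν.toFun Z ≤ 1}, dEmanc ρ Z ε) =
        (((dualNormF ν.toFun Q)⁻¹ : ℝ) : EReal) ∧
      ∀ Q' : HMat d, opNorm Q' ≤ 1 → 1 - ε ≤ hip Q' ρ →
        (((dualNormF ν.toFun Q')⁻¹ : ℝ) : EReal) ≤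
          ⨅ Z ∈ {Z : HMat d | ν.toFun Z ≤ 1}, dEmanc ρ Z ε := by
  obtain ⟨Q₀, hQ₀, Z₀, hZ₀, hs⟩ := exists_saddle ν.toMatNorm ρ hρ ε hε0
  -- The value of the game is positive: play `ρ / ‖ρ‖_μ` against `Q₀`.
  have hv : 0 < hip Q₀ Z₀ := by
    have hρ1 : 0 < ν.toFun ρ := zero_lt_one.trans_le (ν.one_le_state' ρ hρ)
    have hmem : ν.toFun ((ν.toFun ρ)⁻¹ • ρ) ≤ 1 := by
      rw [ν.smul', abs_of_pos (inv_pos.2 hρ1), inv_mul_cancel₀ hρ1.ne']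
    refine lt_of_lt_of_le ?_ (hs Q₀ hQ₀ _ hmem)
    have : hip Q₀ ((ν.toFun ρ)⁻¹ • ρ) = (ν.toFun ρ)⁻¹ * hip Q₀ ρ := (hipL Q₀).map_smul _ _
    rw [this]
    exact mul_pos (inv_pos.2 hρ1) (lt_of_lt_of_le (by linarith) hQ₀.2)
  have hdual : dualNormF ν.toFun Q₀ = hip Q₀ Z₀ := by
    refine le_antisymm (csSup_le ⟨_, Z₀, hZ₀, rfl⟩ ?_) (hip_le_dualNormF ν.toMatNorm Q₀ Z₀ hZ₀)
    rintro r ⟨X, hX, rfl⟩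
    exact hs Q₀ hQ₀ X hX
  have hinf : sInf (dhSet ρ Z₀ ε) = hip Q₀ Z₀ := by
    refine IsLeast.csInf_eq ?_
    rw [dhSet_eq]
    refine ⟨⟨Q₀, hQ₀, rfl⟩, ?_⟩
    rintro r ⟨Q, hQ, rfl⟩
    exact hs Q hQ Z₀ hZ₀
  have hval : (⨅ Z ∈ {Z : HMat d | ν.toFun Z ≤ 1}, dEmanc ρ Z ε) =
      (((hip Q₀ Z₀)⁻¹ : ℝ) : EReal) := by
    refine le_antisymm ((iInf₂_le Z₀ hZ₀).trans ?_) (le_iInf₂ fun Z hZ => ?_)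
    · rw [dEmanc, hinf, if_pos hv]
    · rw [dEmanc]
      split_ifs with hpos
      · have hle : sInf (dhSet ρ Z ε) ≤ hip Q₀ Z₀ :=
          (csInf_le (bddBelow_dhSet ρ ε Z) (by rw [dhSet_eq]; exact ⟨Q₀, hQ₀, rfl⟩)).trans
            (hs Q₀ hQ₀ Z hZ)
        exact EReal.coe_le_coe_iff.2 (inv_anti₀ hpos hle)
      · exact le_top
  refine ⟨Q₀, (opNorm_le_one_iff Q₀).2 hQ₀.1, hQ₀.2, by rw [hval, hdual], fun Q' h1 h2 => ?_⟩
  rw [hval]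
  refine EReal.coe_le_coe_iff.2 (inv_anti₀ hv ?_)
  exact (hs Q' ⟨(opNorm_le_one_iff Q').1 h1, h2⟩ Z₀ hZ₀).trans
    (hip_le_dualNormF ν.toMatNorm Q' Z₀ hZ₀)
end
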